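/- With t₃ := 4a³ − t₂a − b², the derivations R_τ and R_z of ℂ[a,b,c,t₁,t₂] satisfy R_τ(t₃) = 6t₁t₃ − t₂²/3 and R_z(t₃) = 0. Consequently R_τ preserves the subring ℂ[t₁,t₂,t₃] ⊆ ℂ[a,b,c,t₁,t₂], on which it restricts to the Ramanujan vector field sending t₁ ↦ t₁² − t₂/12, t₂ ↦ 4t₁t₂ − 6t₃, t₃ ↦ 6t₁t₃ − t₂²/3, while R_z annihilates all three of t₁, t₂ and t₃. -/

import Mathlib

/-! The values of the two derivations on `t₃ = 4a³ − t₂a − b²` follow from the Leibniz rule,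
`D t₃ = 12a² D a − a D t₂ − t₂ D a − 2b D b`, and a polynomial identity in `a, b, c, t₁, t₂`.
The image under `R_τ` of each of the generators `t₁, t₂, t₃` is then a polynomial in
`t₁, t₂, t₃`, and a derivation that maps generators of a subalgebra into the subalgebra
preserves it (`derivation_mem_adjoin`). -/

open MvPolynomial

noncomputable section

/-- The polynomial ring `ℂ[a,b,c,t₁,t₂]`. -/
abbrev Poly5 := MvPolynomial (Fin 5) ℂ

def a : Poly5 := X 0
def b : Poly5 := X 1
def c : Poly5 := X 2
def t1 : Poly5 := X 3
def t2 : Poly5 := X 4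
/-- `t₃` denotes the polynomial `4a³ − t₂a − b²`. -/
def t3 : Poly5 := 4 * a ^ 3 - t2 * a - b ^ 2

/-- The modular vector field `R_τ`, i.e. the ℂ-derivation of `ℂ[a,b,c,t₁,t₂]` with
`R_τ(a) = −2a² + 2at₁ + bc + t₂/3`, `R_τ(b) = 6a²c − (t₂/2)c − 3ab + 3bt₁`,
`R_τ(c) = ac + ct₁ − b/2`, `R_τ(t₁) = t₁² − t₂/12`, `R_τ(t₂) = 4t₁t₂ − 6t₃`. -/
def Rτ : Derivation ℂ Poly5 Poly5 :=
  mkDerivation ℂ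
    ![-2 * a ^ 2 + 2 * a * t1 + b * c + (1 / 3 : ℂ) • t2,
      6 * a ^ 2 * c - (1 / 2 : ℂ) • (t2 * c) - 3 * a * b + 3 * b * t1,
      a * c + c * t1 - (1 / 2 : ℂ) • b,
      t1 ^ 2 - (1 / 12 : ℂ) • t2,
      4 * t1 * t2 - 6 * t3]

/-- The modular vector field `R_z`, i.e. the ℂ-derivation of `ℂ[a,b,c,t₁,t₂]` with
`R_z(a) = b`, `R_z(b) = 6a² − t₂/2`, `R_z(c) = a + t₁`, `R_z(t₁) = 0`, `R_z(t₂) = 0`. -/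
def Rz : Derivation ℂ Poly5 Poly5 :=
  mkDerivation ℂ
    ![b, 6 * a ^ 2 - (1 / 2 : ℂ) • t2, a + t1, 0, 0]

/-- By the Leibniz rule, a derivation preserves a subalgebra as soon as it maps a generating
set into it. -/
theorem derivation_mem_adjoin {R A : Type*} [CommRing R] [CommRing A] [Algebra R A]
    (D : Derivation R A A) (s : Set A) (hs : ∀ x ∈ s, D x ∈ Algebra.adjoin R s) :
    ∀ f ∈ Algebra.adjoin R s, D f ∈ Algebra.adjoin R s := by
  intro f hf
  induction hf using Algebra.adjoin_induction with
  | mem x hx => exact hs x hx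
  | algebraMap r => simp
  | add x y _ _ hx hy => rw [map_add]; exact add_mem hx hy
  | mul x y hx' hy' hx hy =>
    rw [D.leibniz, smul_eq_mul, smul_eq_mul]
    exact add_mem (mul_mem hx' hy) (mul_mem hy' hx)

theorem derivation_t3 (D : Derivation ℂ Poly5 Poly5) :
    D t3 = 12 * a ^ 2 * D a - (a * D t2 + t2 * D a) - 2 * b * D b := by
  have h4 : D (4 : Poly5) = 0 := D.map_natCast 4
  simp only [t3, map_sub, D.leibniz, D.leibniz_pow, h4, smul_eq_mul, nsmul_eq_mul]
  push_cast
  ring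

theorem two_mul_C_half : (2 : Poly5) * C (1 / 2 : ℂ) = 1 := by
  rw [← map_ofNat (C : ℂ →+* Poly5) 2, ← map_mul]
  norm_num

theorem three_mul_C_third : (3 : Poly5) * C (1 / 3 : ℂ) = 1 := by
  rw [← map_ofNat (C : ℂ →+* Poly5) 3, ← map_mul]
  norm_num

theorem Rτ_t1 : Rτ t1 = t1 ^ 2 - (1 / 12 : ℂ) • t2 := mkDerivation_X ℂ _ 3

theorem Rτ_t2 : Rτ t2 = 4 * t1 * t2 - 6 * t3 := mkDerivation_X ℂ _ 4

theorem Rτ_t3 : Rτ t3 = 6 * t1 * t3 - (1 / 3 : ℂ) • t2 ^ 2 := by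
  have ha : Rτ a = -2 * a ^ 2 + 2 * a * t1 + b * c + (1 / 3 : ℂ) • t2 := mkDerivation_X ℂ _ 0
  have hb : Rτ b = 6 * a ^ 2 * c - (1 / 2 : ℂ) • (t2 * c) - 3 * a * b + 3 * b * t1 :=
    mkDerivation_X ℂ _ 1
  rw [derivation_t3, ha, hb, Rτ_t2, t3]
  simp only [smul_eq_C_mul]
  linear_combination 4 * a ^ 2 * t2 * three_mul_C_third + b * c * t2 * two_mul_C_half

theorem Rz_t2 : Rz t2 = 0 := mkDerivation_X ℂ _ 4

theorem Rz_t3 : Rz t3 = 0 := by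
  have ha : Rz a = b := mkDerivation_X ℂ _ 0
  have hb : Rz b = 6 * a ^ 2 - (1 / 2 : ℂ) • t2 := mkDerivation_X ℂ _ 1
  rw [derivation_t3, ha, hb, Rz_t2]
  simp only [smul_eq_C_mul]
  linear_combination b * t2 * two_mul_C_half

/-- `R_τ(t₃) = 6t₁t₃ − t₂²/3` and `R_z(t₃) = 0`; consequently `R_τ` preserves the subring
`ℂ[t₁,t₂,t₃]`, on which it restricts to the Ramanujan vector field, while `R_z`
annihilates `t₁`, `t₂` and `t₃`. -/
theorem statement6 :
    Rτ t3 = 6 * t1 * t3 - (1 / 3 : ℂ) • t2 ^ 2 ∧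
    Rz t3 = 0 ∧
    (∀ f ∈ Algebra.adjoin ℂ ({t1, t2, t3} : Set Poly5),
      Rτ f ∈ Algebra.adjoin ℂ ({t1, t2, t3} : Set Poly5)) ∧
    Rτ t1 = t1 ^ 2 - (1 / 12 : ℂ) • t2 ∧
    Rτ t2 = 4 * t1 * t2 - 6 * t3 ∧
    Rz t1 = 0 ∧
    Rz t2 = 0 := by
  refine ⟨Rτ_t3, Rz_t3, derivation_mem_adjoin _ _ ?_, Rτ_t1, Rτ_t2, mkDerivation_X ℂ _ 3, Rz_t2⟩
  have h1 : t1 ∈ Algebra.adjoin ℂ ({t1, t2, t3} : Set Poly5) :=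
    Algebra.subset_adjoin (by simp)
  have h2 : t2 ∈ Algebra.adjoin ℂ ({t1, t2, t3} : Set Poly5) :=
    Algebra.subset_adjoin (by simp)
  have h3 : t3 ∈ Algebra.adjoin ℂ ({t1, t2, t3} : Set Poly5) :=
    Algebra.subset_adjoin (by simp)
  rintro x (rfl | rfl | rfl)
  · rw [Rτ_t1]
    exact sub_mem (pow_mem h1 2) (Subalgebra.smul_mem _ h2 _)
  · rw [Rτ_t2]
    exact sub_mem (mul_mem (mul_mem (ofNat_mem _ 4) h1) h2) (mul_mem (ofNat_mem _ 6) h3)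
  · rw [Rτ_t3]
    exact sub_mem (mul_mem (mul_mem (ofNat_mem _ 6) h1) h3)
      (Subalgebra.smul_mem _ (pow_mem h2 2) _)
end
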